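/- arXiv:1304.7973 — 2 statements merged into one kernel-verified Lean document; each statement's English description precedes it below -/
import Mathlib

section
/- Let G(θ) = (∂C/∂θ_1(θ), …, ∂C/∂θ_p(θ)) be the gradient of the Bingham normalising constant. Then on the set {θ ∈ ℝ^p : θ_i ≠ θ_j for all i ≠ j}, G satisfies the Pfaffian system: for i ≠ j, ∂G_j/∂θ_i = (G_i − G_j)/(2(θ_i − θ_j)), and for each i, ∂G_i/∂θ_i = G_i − ∑_{k ≠ i} (G_i − G_k)/(2(θ_i − θ_k)), where the sum runs over k ∈ {1,…,p} \ {i}. -/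
open MeasureTheory

/-- The normalising constant of the Bingham distribution. -/
noncomputable def binghamC (p : ℕ) (θ : Fin p → ℝ) : ℝ :=
  ∫ x in {x : EuclideanSpace ℝ (Fin p) | ‖x‖ = 1},
    Real.exp (∑ i, θ i * x i ^ 2) ∂ μH[(p : ℝ) - 1]

/-!
Differentiating under the integral sign, the first and second derivatives of `C` are the moments
of `x j ^ 2` and `x j ^ 2 * x i ^ 2` against the density `exp (∑ k, θ k * x k ^ 2)`. The surface
measure is invariant under the rotations `exp (t • A)` with `A` skew-adjoint, so
`∫ x, fderiv ℝ f x (A x) = 0` for every `C¹` function `f`. For `A` the generator of the rotations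
of the `(i, j)`-plane and `f x = x i * x j * exp (∑ k, θ k * x k ^ 2)` this is the formula for the
mixed derivatives; the pure second derivatives follow from it because `∑ k, x k ^ 2 = 1` on the
sphere. The integrals make sense because the sphere has finite Hausdorff measure, being locally the
`C¹` image of a ball under stereographic projection.
-/

open Metric Module NormedSpace
open scoped Topology

section CompactlyConcentrated

variable {X G : Type*} [TopologicalSpace X] [SecondCountableTopology X] [MeasurableSpace X]
  [OpensMeasurableSpace X] [NormedAddCommGroup G]
  {μ : Measure X} [IsFiniteMeasure μ] {K : Set X}

theorem integrable_of_continuous_of_ae_mem_isCompact (hK : IsCompact K)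
    (hμK : ∀ᵐ x ∂μ, x ∈ K) {f : X → G} (hf : Continuous f) : Integrable f μ := by
  obtain ⟨M, hM⟩ := hK.exists_bound_of_continuousOn hf.continuousOn
  exact .of_bound hf.aestronglyMeasurable M (hμK.mono hM)

variable {V : Type*} [NormedAddCommGroup V] [NormedSpace ℝ V] [NormedSpace ℝ G]

theorem hasFDerivAt_integral_of_continuous_of_ae_mem_isCompact [ProperSpace V]
    (hK : IsCompact K) (hμK : ∀ᵐ x ∂μ, x ∈ K)
    {F : V → X → G} {F' : V → X → V →L[ℝ] G} (hF : ∀ v, Continuous (F v))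
    (hF' : Continuous fun q : V × X => F' q.1 q.2)
    (hderiv : ∀ v x, HasFDerivAt (F · x) (F' v x) v) (v₀ : V) :
    HasFDerivAt (fun v => ∫ x, F v x ∂μ) (∫ x, F' v₀ x ∂μ) v₀ := by
  obtain ⟨M, hM⟩ :=
    ((isCompact_closedBall v₀ 1).prod hK).exists_bound_of_continuousOn hF'.continuousOn
  exact hasFDerivAt_integral_of_dominated_of_fderiv_le
    (closedBall_mem_nhds v₀ one_pos)
    (.of_forall fun v => (hF v).aestronglyMeasurable)
    (integrable_of_continuous_of_ae_mem_isCompact hK hμK (hF v₀))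
    (hF'.comp (Continuous.prodMk_right v₀)).aestronglyMeasurable
    (hμK.mono fun x hx v hv => hM (v, x) ⟨hv, hx⟩)
    (integrable_const M)
    (.of_forall fun x v _ => hderiv v x)

theorem hasDerivAt_integral_of_continuous_of_ae_mem_isCompact
    (hK : IsCompact K) (hμK : ∀ᵐ x ∂μ, x ∈ K)
    {F F' : ℝ → X → G} (hF : ∀ t, Continuous (F t))
    (hF' : Continuous fun q : ℝ × X => F' q.1 q.2)
    (hderiv : ∀ t x, HasDerivAt (F · x) (F' t x) t) (t₀ : ℝ) :
    HasDerivAt (fun t => ∫ x, F t x ∂μ) (∫ x, F' t₀ x ∂μ) t₀ := by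
  have hspan : Continuous fun q : ℝ × X => ContinuousLinearMap.toSpanSingleton ℝ (F' q.1 q.2) :=
    (ContinuousLinearMap.toSpanSingletonCLE (𝕜 := ℝ) (E := G)).continuous.comp hF'
  have h := hasFDerivAt_integral_of_continuous_of_ae_mem_isCompact hK hμK hF hspan
    (fun t x => (hderiv t x).hasFDerivAt) t₀
  have hint : Integrable (fun x => ContinuousLinearMap.toSpanSingleton ℝ (F' t₀ x)) μ :=
    integrable_of_continuous_of_ae_mem_isCompact hK hμK (hspan.comp (Continuous.prodMk_right t₀))
  exact h.hasDerivAt.congr_deriv (by simp [ContinuousLinearMap.integral_apply hint])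

end CompactlyConcentrated

section HausdorffMeasure

theorem hausdorffMeasure_image_lt_top_of_contDiffOn {E F : Type*}
    [NormedAddCommGroup E] [NormedSpace ℝ E] [FiniteDimensional ℝ E]
    [MeasurableSpace E] [BorelSpace E]
    [NormedAddCommGroup F] [NormedSpace ℝ F] [MeasurableSpace F] [BorelSpace F]
    {f : E → F} {s : Set E} (hf : ContDiffOn ℝ 1 f s) (hs : Convex ℝ s) (hs' : IsCompact s) :
    μH[finrank ℝ E] (f '' s) < ⊤ := by
  obtain ⟨C, hC⟩ := hf.exists_lipschitzOnWith one_ne_zero hs hs'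
  refine (hC.hausdorffMeasure_image_le (Nat.cast_nonneg _)).trans_lt ?_
  exact ENNReal.mul_lt_top (by simp) hs'.measure_lt_top

variable {E : Type*} [NormedAddCommGroup E] [InnerProductSpace ℝ E]

theorem image_stereographic_symm_mem_nhdsWithin_sphere {v : E} (hv : ‖v‖ = 1)
    {x : sphere (0 : E) 1} (hx : x ∈ (stereographic hv).source) {s : Set (ℝ ∙ v)ᗮ}
    (hs : s ∈ 𝓝 (stereographic hv x)) :
    (fun w => ((stereographic hv).symm w : E)) '' s ∈ 𝓝[sphere 0 1] (x : E) := by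
  rw [← map_nhds_subtype_val x, ← (stereographic hv).symm_map_nhds_eq hx, Filter.map_map]
  exact Filter.image_mem_map hs

theorem contDiff_stereographic_symm {v : E} (hv : ‖v‖ = 1) {m : WithTop ℕ∞} :
    ContDiff ℝ m fun w : (ℝ ∙ v)ᗮ => ((stereographic hv).symm w : E) :=
  contDiff_stereoInvFunAux.comp (ℝ ∙ v)ᗮ.subtypeL.contDiff

variable [MeasurableSpace E] [BorelSpace E]

theorem hausdorffMeasure_unitSphere_lt_top {n : ℕ} [Fact (finrank ℝ E = n + 1)] :
    μH[n] (sphere (0 : E) 1) < ⊤ := by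
  have : FiniteDimensional ℝ E := .of_fact_finrank_eq_succ n
  refine (isCompact_sphere 0 1).measure_lt_top_of_nhdsWithin fun x hx => ?_
  have hv : ‖-x‖ = 1 := by simpa using hx
  have hsource : ⟨x, hx⟩ ∈ (stereographic hv).source := ne_neg_of_mem_unit_sphere ℝ ⟨x, hx⟩
  have hfin : finrank ℝ (ℝ ∙ -x)ᗮ = n :=
    Submodule.finrank_orthogonal_span_singleton (norm_ne_zero_iff.1 (hv ▸ one_ne_zero))
  refine ⟨_, image_stereographic_symm_mem_nhdsWithin_sphere hv hsource
    (closedBall_mem_nhds _ one_pos), ?_⟩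
  rw [← hfin]
  exact hausdorffMeasure_image_lt_top_of_contDiffOn (contDiff_stereographic_symm hv).contDiffOn
    (convex_closedBall _ _) (isCompact_closedBall _ _)

variable (E) in
/-- The surface measure of the unit sphere of `E`, as a measure on the ambient space `E`. It is
encoded as a Hausdorff measure whose dimension is a real subtraction, so it is the surface measure
only for nontrivial `E`. -/
noncomputable def unitSphereMeasure : Measure E :=
  μH[(finrank ℝ E : ℝ) - 1].restrict (sphere 0 1)

instance [FiniteDimensional ℝ E] [Nontrivial E] : IsFiniteMeasure (unitSphereMeasure E) := by
  obtain ⟨n, hn⟩ := Nat.exists_eq_succ_of_ne_zero (finrank_pos (R := ℝ) (M := E)).ne'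
  have : Fact (finrank ℝ E = n + 1) := ⟨hn⟩
  refine isFiniteMeasure_restrict.2 ?_
  simpa [hn] using (hausdorffMeasure_unitSphere_lt_top (E := E) (n := n)).ne

theorem ae_unitSphereMeasure_mem_sphere : ∀ᵐ x ∂unitSphereMeasure E, x ∈ sphere 0 1 :=
  ae_restrict_mem isClosed_sphere.measurableSet

theorem measurePreserving_unitSphereMeasure (R : E ≃ₗᵢ[ℝ] E) :
    MeasurePreserving R (unitSphereMeasure E) (unitSphereMeasure E) := by
  simpa [unitSphereMeasure] using
    (R.toIsometryEquiv.measurePreserving_hausdorffMeasure _).restrict_preimage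
      (s := sphere 0 1) isClosed_sphere.measurableSet

end HausdorffMeasure

section InfinitesimalInvariance

variable {E : Type*} [NormedAddCommGroup E] [InnerProductSpace ℝ E] [CompleteSpace E]

theorem rankOne_sub_rankOne_mem_skewAdjoint (u v : E) :
    InnerProductSpace.rankOne ℝ u v - InnerProductSpace.rankOne ℝ v u
      ∈ skewAdjoint (E →L[ℝ] E) := by
  simp [skewAdjoint.mem_iff, ContinuousLinearMap.star_eq_adjoint]

theorem integral_fderiv_apply_eq_zero_of_mem_skewAdjoint [SecondCountableTopology E]
    [MeasurableSpace E] [BorelSpace E] {μ : Measure E} [IsFiniteMeasure μ] {K : Set E}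
    (hK : IsCompact K) (hμK : ∀ᵐ x ∂μ, x ∈ K)
    (hμ : ∀ R : E ≃ₗᵢ[ℝ] E, MeasurePreserving R μ μ)
    {A : E →L[ℝ] E} (hA : A ∈ skewAdjoint (E →L[ℝ] E)) {f : E → ℝ} (hf : ContDiff ℝ 1 f) :
    ∫ x, fderiv ℝ f x (A x) ∂μ = 0 := by
  let : NormedAlgebra ℚ (E →L[ℝ] E) := .restrictScalars ℚ ℝ _
  let U : ℝ → E →L[ℝ] E := fun t => exp (t • A)
  have hU (t : ℝ) : HasDerivAt U (A * U t) t := hasDerivAt_exp_smul_const' A t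
  have hUcont : Continuous U := continuous_iff_continuousAt.2 fun t => (hU t).continuousAt
  have hinv (t : ℝ) : ∫ x, f (U t x) ∂μ = ∫ x, f x ∂μ := by
    have hmem : U t ∈ unitary (E →L[ℝ] E) :=
      exp_mem_unitary_of_mem_skewAdjoint (skewAdjoint.smul_mem t hA)
    let R : E ≃ₗᵢ[ℝ] E := Unitary.linearIsometryEquiv ⟨U t, hmem⟩
    exact (hμ R).integral_comp R.toHomeomorph.measurableEmbedding f
  have hpath : Continuous fun q : ℝ × E => U q.1 q.2 :=
    (hUcont.comp continuous_fst).clm_apply continuous_snd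
  have hderiv : HasDerivAt (fun t => ∫ x, f (U t x) ∂μ)
      (∫ x, fderiv ℝ f (U 0 x) (A (U 0 x)) ∂μ) 0 :=
    hasDerivAt_integral_of_continuous_of_ae_mem_isCompact hK hμK
      (F' := fun t x => fderiv ℝ f (U t x) (A (U t x)))
      (fun t => hf.continuous.comp (U t).continuous)
      (((hf.continuous_fderiv one_ne_zero).comp hpath).clm_apply (A.continuous.comp hpath))
      (fun t x => (hf.differentiable one_ne_zero (U t x)).hasFDerivAt.comp_hasDerivAt t
        ((hU t).clm_apply (hasDerivAt_const t x) |>.congr_deriv (by simp))) 0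
  simp only [hinv] at hderiv
  simpa [U] using hderiv.unique (hasDerivAt_const 0 _)

end InfinitesimalInvariance

section Bingham

theorem fderiv_apply_mul_apply {ι : Type*} [Finite ι] (i j : ι) (x y : EuclideanSpace ℝ ι) :
    fderiv ℝ (fun x : EuclideanSpace ℝ ι => x i * x j) x y = x i * y j + x j * y i := by
  have := Fintype.ofFinite ι
  have hcoord (k : ι) := PiLp.hasFDerivAt_apply (𝕜 := ℝ) 2 (E := fun _ : ι => ℝ) x k
  simp [((hcoord i).fun_mul (hcoord j)).fderiv]

variable {ι : Type*} [Fintype ι]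

/-- The unnormalised moment of `g` under the Bingham density `x ↦ exp (∑ i, θ i * x i ^ 2)` with
respect to the reference measure `μ`, which is the surface measure of the unit sphere for the
classical Bingham distribution. -/
noncomputable def binghamMoment (μ : Measure (EuclideanSpace ℝ ι))
    (g : EuclideanSpace ℝ ι → ℝ) (θ : ι → ℝ) : ℝ :=
  ∫ x, g x * Real.exp (∑ i, θ i * x i ^ 2) ∂μ

variable {μ : Measure (EuclideanSpace ℝ ι)}

theorem binghamMoment_const_mul (c : ℝ) (g : EuclideanSpace ℝ ι → ℝ) (θ : ι → ℝ) :
    binghamMoment μ (fun x => c * g x) θ = c * binghamMoment μ g θ := by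
  simp only [binghamMoment, mul_assoc, integral_const_mul]

variable [IsFiniteMeasure μ] {K : Set (EuclideanSpace ℝ ι)}

theorem integrable_mul_exp_sum_mul_sq (hK : IsCompact K) (hμK : ∀ᵐ x ∂μ, x ∈ K)
    {g : EuclideanSpace ℝ ι → ℝ} (hg : Continuous g) (θ : ι → ℝ) :
    Integrable (fun x => g x * Real.exp (∑ i, θ i * x i ^ 2)) μ :=
  integrable_of_continuous_of_ae_mem_isCompact hK hμK (by fun_prop)

theorem hasFDerivAt_binghamMoment (hK : IsCompact K) (hμK : ∀ᵐ x ∂μ, x ∈ K)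
    {g : EuclideanSpace ℝ ι → ℝ} (hg : Continuous g) (θ : ι → ℝ) :
    HasFDerivAt (binghamMoment μ g)
      (∑ j, binghamMoment μ (fun x => g x * x j ^ 2) θ •
        ContinuousLinearMap.proj (R := ℝ) (φ := fun _ => ℝ) j) θ := by
  have hexp (θ : ι → ℝ) (x : EuclideanSpace ℝ ι) :
      HasFDerivAt (fun θ : ι → ℝ => g x * Real.exp (∑ i, θ i * x i ^ 2))
        (∑ j, (g x * x j ^ 2 * Real.exp (∑ i, θ i * x i ^ 2)) •
          ContinuousLinearMap.proj (R := ℝ) (φ := fun _ => ℝ) j) θ := by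
    refine ((HasFDerivAt.fun_sum fun i _ =>
      (hasFDerivAt_apply i θ).mul_const (x i ^ 2)).exp.const_mul (g x)).congr_fderiv ?_
    simp only [Finset.smul_sum, smul_smul]
    exact Finset.sum_congr rfl fun j _ => by congr 1; ring
  have h := hasFDerivAt_integral_of_continuous_of_ae_mem_isCompact hK hμK
    (fun θ => by fun_prop) (by fun_prop) hexp θ
  rw [integral_finsetSum] at h
  · simp only [integral_smul_const] at h
    exact h
  · exact fun j _ => (integrable_mul_exp_sum_mul_sq hK hμK (by fun_prop) θ).smul_const _

theorem fderiv_binghamMoment_single [DecidableEq ι] (hK : IsCompact K) (hμK : ∀ᵐ x ∂μ, x ∈ K)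
    {g : EuclideanSpace ℝ ι → ℝ} (hg : Continuous g) (θ : ι → ℝ) (j : ι) :
    fderiv ℝ (binghamMoment μ g) θ (Pi.single j 1) =
      binghamMoment μ (fun x => g x * x j ^ 2) θ := by
  simp [(hasFDerivAt_binghamMoment hK hμK hg θ).fderiv, Pi.single_apply]

theorem binghamMoment_fderiv_apply_add_eq_zero_of_mem_skewAdjoint
    (hK : IsCompact K) (hμK : ∀ᵐ x ∂μ, x ∈ K)
    (hμ : ∀ R : EuclideanSpace ℝ ι ≃ₗᵢ[ℝ] EuclideanSpace ℝ ι, MeasurePreserving R μ μ)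
    {A : EuclideanSpace ℝ ι →L[ℝ] EuclideanSpace ℝ ι}
    (hA : A ∈ skewAdjoint (EuclideanSpace ℝ ι →L[ℝ] EuclideanSpace ℝ ι))
    {g : EuclideanSpace ℝ ι → ℝ} (hg : ContDiff ℝ 1 g) (θ : ι → ℝ) :
    binghamMoment μ
      (fun x => fderiv ℝ g x (A x) + g x * ∑ k, θ k * (2 * x k * A x k)) θ = 0 := by
  rw [binghamMoment, ← integral_fderiv_apply_eq_zero_of_mem_skewAdjoint hK hμK hμ hA
    (f := fun x => g x * Real.exp (∑ k, θ k * x k ^ 2)) (by fun_prop)]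
  congr 1 with x
  have hexp := (HasFDerivAt.fun_sum (u := Finset.univ) fun k _ =>
    ((PiLp.hasFDerivAt_apply 2 x k).pow 2).const_mul (θ k)).exp
  have hfderiv := ((hg.differentiable one_ne_zero x).hasFDerivAt.fun_mul hexp).fderiv
  rw [hfderiv]
  simp only [mul_assoc, Nat.add_one_sub_one, pow_one, nsmul_eq_mul, Nat.cast_ofNat, add_apply,
    smul_apply, sum_apply, PiLp.proj_apply, smul_eq_mul]
  ring

theorem binghamMoment_sub (hK : IsCompact K) (hμK : ∀ᵐ x ∂μ, x ∈ K)
    {g h : EuclideanSpace ℝ ι → ℝ} (hg : Continuous g) (hh : Continuous h) (θ : ι → ℝ) :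
    binghamMoment μ (fun x => g x - h x) θ = binghamMoment μ g θ - binghamMoment μ h θ := by
  simp only [binghamMoment, sub_mul]
  exact integral_sub (integrable_mul_exp_sum_mul_sq hK hμK hg θ)
    (integrable_mul_exp_sum_mul_sq hK hμK hh θ)

theorem binghamMoment_sq_sub_binghamMoment_sq (hK : IsCompact K) (hμK : ∀ᵐ x ∂μ, x ∈ K)
    (hμ : ∀ R : EuclideanSpace ℝ ι ≃ₗᵢ[ℝ] EuclideanSpace ℝ ι, MeasurePreserving R μ μ)
    (θ : ι → ℝ) {i j : ι} (hij : i ≠ j) :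
    binghamMoment μ (fun x => x i ^ 2) θ - binghamMoment μ (fun x => x j ^ 2) θ =
      2 * (θ i - θ j) * binghamMoment μ (fun x => x j ^ 2 * x i ^ 2) θ := by
  classical
  let A : EuclideanSpace ℝ ι →L[ℝ] EuclideanSpace ℝ ι :=
    InnerProductSpace.rankOne ℝ (EuclideanSpace.single j 1) (EuclideanSpace.single i 1) -
      InnerProductSpace.rankOne ℝ (EuclideanSpace.single i 1) (EuclideanSpace.single j 1)
  have hA (x : EuclideanSpace ℝ ι) (k : ι) :
      A x k = (if k = j then x i else 0) - if k = i then x j else 0 := by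
    simp [A, EuclideanSpace.inner_single_left]
  have hgen (x : EuclideanSpace ℝ ι) :
      fderiv ℝ (fun x : EuclideanSpace ℝ ι => x i * x j) x (A x) +
          x i * x j * ∑ k, θ k * (2 * x k * A x k) =
        x i ^ 2 - x j ^ 2 - 2 * (θ i - θ j) * (x j ^ 2 * x i ^ 2) := by
    simp only [fderiv_apply_mul_apply, hA, mul_sub, mul_ite, mul_zero, Finset.sum_sub_distrib,
      Finset.sum_ite_eq', Finset.mem_univ, if_true, hij, hij.symm, if_false]
    ring
  have hzero := binghamMoment_fderiv_apply_add_eq_zero_of_mem_skewAdjoint hK hμK hμ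
    (rankOne_sub_rankOne_mem_skewAdjoint (EuclideanSpace.single j 1) (EuclideanSpace.single i 1))
    (g := fun x => x i * x j) (by fun_prop) θ
  rw [funext hgen, binghamMoment_sub hK hμK (by fun_prop) (by fun_prop),
    binghamMoment_sub hK hμK (by fun_prop) (by fun_prop), binghamMoment_const_mul] at hzero
  exact sub_eq_zero.1 hzero

theorem binghamMoment_sq_mul_sq_of_ne (hK : IsCompact K) (hμK : ∀ᵐ x ∂μ, x ∈ K)
    (hμ : ∀ R : EuclideanSpace ℝ ι ≃ₗᵢ[ℝ] EuclideanSpace ℝ ι, MeasurePreserving R μ μ)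
    {θ : ι → ℝ} {i j : ι} (hθ : θ i ≠ θ j) :
    binghamMoment μ (fun x => x j ^ 2 * x i ^ 2) θ =
      (binghamMoment μ (fun x => x i ^ 2) θ - binghamMoment μ (fun x => x j ^ 2) θ) /
        (2 * (θ i - θ j)) := by
  rw [binghamMoment_sq_sub_binghamMoment_sq hK hμK hμ θ (ne_of_apply_ne θ hθ),
    mul_div_cancel_left₀ _ (mul_ne_zero two_ne_zero (sub_ne_zero.2 hθ))]

theorem sum_binghamMoment_mul_sq (hμ : ∀ᵐ x ∂μ, x ∈ sphere 0 1)
    {g : EuclideanSpace ℝ ι → ℝ} (hg : Continuous g) (θ : ι → ℝ) :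
    ∑ k, binghamMoment μ (fun x => g x * x k ^ 2) θ = binghamMoment μ g θ := by
  simp only [binghamMoment]
  rw [← integral_finsetSum _ fun k _ =>
    integrable_mul_exp_sum_mul_sq (isCompact_sphere 0 1) hμ (by fun_prop) θ]
  refine integral_congr_ae (hμ.mono fun x hx => ?_)
  have hnorm : ∑ k, x k ^ 2 = 1 := by
    rw [← EuclideanSpace.real_norm_sq_eq, mem_sphere_zero_iff_norm.1 hx, one_pow]
  simp only [← Finset.sum_mul, ← Finset.mul_sum, hnorm, mul_one]

theorem binghamMoment_sq_mul_sq_self [DecidableEq ι] (hμS : ∀ᵐ x ∂μ, x ∈ sphere 0 1)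
    (hμ : ∀ R : EuclideanSpace ℝ ι ≃ₗᵢ[ℝ] EuclideanSpace ℝ ι, MeasurePreserving R μ μ)
    {θ : ι → ℝ} {i : ι} (hθ : ∀ k ≠ i, θ i ≠ θ k) :
    binghamMoment μ (fun x => x i ^ 2 * x i ^ 2) θ =
      binghamMoment μ (fun x => x i ^ 2) θ - ∑ k ∈ Finset.univ.erase i,
        (binghamMoment μ (fun x => x i ^ 2) θ - binghamMoment μ (fun x => x k ^ 2) θ) /
          (2 * (θ i - θ k)) := by
  have hmixed : ∀ k ∈ Finset.univ.erase i, binghamMoment μ (fun x => x i ^ 2 * x k ^ 2) θ =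
      (binghamMoment μ (fun x => x i ^ 2) θ - binghamMoment μ (fun x => x k ^ 2) θ) /
        (2 * (θ i - θ k)) := fun k hk => by
    simpa only [mul_comm] using binghamMoment_sq_mul_sq_of_ne (isCompact_sphere 0 1) hμS hμ
      (hθ k (Finset.ne_of_mem_erase hk))
  have hsum := sum_binghamMoment_mul_sq hμS (g := fun x => x i ^ 2) (by fun_prop) θ
  rw [← Finset.add_sum_erase _ _ (Finset.mem_univ i)] at hsum
  rw [← Finset.sum_congr rfl hmixed]
  exact eq_sub_of_add_eq hsum

theorem binghamC_eq_binghamMoment (p : ℕ) :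
    binghamC p = binghamMoment (unitSphereMeasure (EuclideanSpace ℝ (Fin p))) fun _ => 1 := by
  have hsphere : {x : EuclideanSpace ℝ (Fin p) | ‖x‖ = 1} = sphere 0 1 := by ext; simp
  ext θ
  simp [binghamC, binghamMoment, unitSphereMeasure, hsphere]

end Bingham

/-- The Pfaffian system for the gradient `G = (∂₁C,…,∂_pC)` of the Bingham
normalising constant, on the set of parameters with pairwise distinct entries:
for `i ≠ j`, `∂_i G_j = (G_i − G_j)/(2(θ_i − θ_j))`, and
`∂_i G_i = G_i − ∑_{k ≠ i} (G_i − G_k)/(2(θ_i − θ_k))`. -/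
theorem bingham_pfaffian (p : ℕ) (hp : 2 ≤ p) (θ : Fin p → ℝ)
    (hθ : ∀ i j : Fin p, i ≠ j → θ i ≠ θ j) :
    (∀ i j : Fin p, i ≠ j →
      fderiv ℝ (fun t => fderiv ℝ (binghamC p) t (Pi.single j 1)) θ (Pi.single i 1)
        = (fderiv ℝ (binghamC p) θ (Pi.single i 1)
            - fderiv ℝ (binghamC p) θ (Pi.single j 1)) / (2 * (θ i - θ j)))
    ∧ (∀ i : Fin p,
      fderiv ℝ (fun t => fderiv ℝ (binghamC p) t (Pi.single i 1)) θ (Pi.single i 1)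
        = fderiv ℝ (binghamC p) θ (Pi.single i 1)
          - ∑ k ∈ Finset.univ.erase i,
              (fderiv ℝ (binghamC p) θ (Pi.single i 1)
                - fderiv ℝ (binghamC p) θ (Pi.single k 1)) / (2 * (θ i - θ k))) := by
  have : NeZero p := ⟨by lia⟩
  have hS := ae_unitSphereMeasure_mem_sphere (E := EuclideanSpace ℝ (Fin p))
  have hR := measurePreserving_unitSphereMeasure (E := EuclideanSpace ℝ (Fin p))
  have hG (t : Fin p → ℝ) (j : Fin p) : fderiv ℝ (binghamC p) t (Pi.single j 1) =
      binghamMoment (unitSphereMeasure _) (fun x => x j ^ 2) t := by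
    simpa [binghamC_eq_binghamMoment] using
      fderiv_binghamMoment_single (isCompact_sphere 0 1) hS (g := fun _ => 1) continuous_const t j
  have hG' (i j : Fin p) : fderiv ℝ (binghamMoment (unitSphereMeasure _) fun x => x j ^ 2) θ
      (Pi.single i 1) = binghamMoment (unitSphereMeasure _) (fun x => x j ^ 2 * x i ^ 2) θ :=
    fderiv_binghamMoment_single (isCompact_sphere 0 1) hS (by fun_prop) θ i
  simp only [hG, hG']
  exact ⟨fun i j hij => binghamMoment_sq_mul_sq_of_ne (isCompact_sphere 0 1) hS hR (hθ i j hij),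
    fun i => binghamMoment_sq_mul_sq_self hS hR fun k hk => hθ i k hk.symm⟩
end

section
/- Let θ_1,…,θ_p < 0 and let x_1,…,x_p be independent centered Gaussian random variables with x_i ~ N(0, (−2θ_i)^{-1}). Then the random variable r = ∑_{i=1}^p x_i² has probability density function (with respect to Lebesgue measure on (0,∞)) given by f(r) = (r^{p/2−1} ∏_{k=1}^p √(−θ_k) / Γ(p/2)) · C(rθ)/C(0), where rθ = (rθ_1,…,rθ_p). Equivalently, the pushforward under x ↦ ‖x‖² of the product Gaussian measure with these variances has density f with respect to Lebesgue measure on (0,∞). -/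
/-!
In polar coordinates the Gaussian density becomes, up to a constant, `exp (r² ∑ θᵢ uᵢ²)` with
`‖u‖ = 1`, so `‖x‖²` has as density a power of `r` times a surface average of `exp (r ∑ θᵢ uᵢ²)`.
That average is taken over the surface measure `Measure.toSphere` of polar coordinates, whereas
`binghamC` integrates against the Hausdorff measure of the sphere. Both are finite, nonzero and
rotation invariant, hence proportional, and the ratio of two Bingham constants does not see the
factor. Proportionality comes from characteristic functions: that of a rotation-invariant measure
`μ` is radial, so averaging it over a sphere with respect to another such probability measure `ν`
reproduces it, and the double integral over `μ` and `ν` is symmetric. The Hausdorff measure of the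
sphere is finite by stereographic projection from two opposite poles, and positive because
orthogonal projection onto a hyperplane maps the sphere onto a set with nonempty interior.
-/

open MeasureTheory

section RotationInvariant

variable {E : Type*} [NormedAddCommGroup E] [InnerProductSpace ℝ E] [MeasurableSpace E]

/-- Invariance of a measure under all linear isometries of the space onto itself, reflections
included: the symmetry shared by all the natural surface measures of the unit sphere. -/
def IsRotationInvariant (μ : Measure E) : Prop :=
  ∀ e : E ≃ₗᵢ[ℝ] E, μ.map e = μ

variable {μ ν : Measure E}

theorem integral_charFun_smul_comm [OpensMeasurableSpace E] [SecondCountableTopology E]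
    [IsFiniteMeasure μ] [IsFiniteMeasure ν] (c : ℝ) :
    ∫ x, charFun μ (c • x) ∂ν = ∫ y, charFun ν (c • y) ∂μ := by
  simp only [charFun_apply]
  rw [integral_integral_swap]
  · simp only [inner_smul_right, real_inner_comm]
  · refine .of_bound (C := 1) ?_ (.of_forall fun z => (Complex.norm_exp_ofReal_mul_I _).le)
    exact Continuous.aestronglyMeasurable (by fun_prop)

namespace IsRotationInvariant

theorem smul (hμ : IsRotationInvariant μ) (c : ENNReal) : IsRotationInvariant (c • μ) :=
  fun e => by rw [Measure.map_smul, hμ e]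

variable [BorelSpace E]

theorem charFun_eq_of_norm_eq (hμ : IsRotationInvariant μ) {s t : E} (hst : ‖s‖ = ‖t‖) :
    charFun μ s = charFun μ t := by
  let e := (ℝ ∙ (s - t))ᗮ.reflection
  have he : e s = t := Submodule.reflection_sub hst
  calc
    charFun μ s = ∫ x, Complex.exp (inner ℝ (e x) (e s) * Complex.I) ∂μ := by
      simp only [charFun_apply, e.inner_map_map]
    _ = charFun (μ.map e) t := by
      rw [he, charFun_apply, integral_map_of_stronglyMeasurable e.continuous.measurable
        (Continuous.stronglyMeasurable (by fun_prop))]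
    _ = charFun μ t := by rw [hμ e]

theorem integral_charFun_norm_smul (hμ : IsRotationInvariant μ) [IsProbabilityMeasure ν]
    (hν : ∀ᵐ x ∂ν, ‖x‖ = 1) (t : E) : ∫ x, charFun μ (‖t‖ • x) ∂ν = charFun μ t := by
  calc
    ∫ x, charFun μ (‖t‖ • x) ∂ν = ∫ _, charFun μ t ∂ν :=
      integral_congr_ae (hν.mono fun x hx => hμ.charFun_eq_of_norm_eq (by simp [norm_smul, hx]))
    _ = charFun μ t := by simp

variable [CompleteSpace E] [SecondCountableTopology E]

theorem eq_of_ae_norm_eq_one [IsProbabilityMeasure μ] [IsProbabilityMeasure ν]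
    (hμ : IsRotationInvariant μ) (hν : IsRotationInvariant ν)
    (hμ1 : ∀ᵐ x ∂μ, ‖x‖ = 1) (hν1 : ∀ᵐ x ∂ν, ‖x‖ = 1) : μ = ν := by
  refine Measure.ext_of_charFun (funext fun t => ?_)
  calc
    charFun μ t = ∫ x, charFun μ (‖t‖ • x) ∂ν := (hμ.integral_charFun_norm_smul hν1 t).symm
    _ = ∫ y, charFun ν (‖t‖ • y) ∂μ := integral_charFun_smul_comm _
    _ = charFun ν t := hν.integral_charFun_norm_smul hμ1 t

theorem average_eq_of_ae_norm_eq_one [IsFiniteMeasure μ] [NeZero μ]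
    [IsFiniteMeasure ν] [NeZero ν] (hμ : IsRotationInvariant μ) (hν : IsRotationInvariant ν)
    (hμ1 : ∀ᵐ x ∂μ, ‖x‖ = 1) (hν1 : ∀ᵐ x ∂ν, ‖x‖ = 1)
    {F : Type*} [NormedAddCommGroup F] [NormedSpace ℝ F] (f : E → F) :
    ⨍ x, f x ∂μ = ⨍ x, f x ∂ν := by
  have heq : (μ Set.univ)⁻¹ • μ = (ν Set.univ)⁻¹ • ν :=
    (hμ.smul _).eq_of_ae_norm_eq_one (hν.smul _) (Measure.ae_smul_measure hμ1 _)
      (Measure.ae_smul_measure hν1 _)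
  rw [average_eq', average_eq', heq]

end IsRotationInvariant

end RotationInvariant

section HausdorffSphere

open Metric Module Set

theorem hausdorffMeasure_image_lt_top {F X : Type*} [NormedAddCommGroup F]
    [NormedSpace ℝ F] [FiniteDimensional ℝ F] [MeasurableSpace F] [BorelSpace F] [MetricSpace X]
    [MeasurableSpace X] [BorelSpace X] {f : F → X} (hf : LocallyLipschitz f) {K : Set F}
    (hK : IsCompact K) : μH[finrank ℝ F] (f '' K) < ⊤ := by
  obtain ⟨C, hC⟩ := hf.locallyLipschitzOn.exists_lipschitzOnWith_of_compact hK
  refine (hC.hausdorffMeasure_image_le (Nat.cast_nonneg _)).trans_lt ?_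
  exact ENNReal.mul_lt_top (by finiteness) hK.measure_lt_top

variable {E : Type*} [NormedAddCommGroup E] [InnerProductSpace ℝ E]

theorem ball_subset_orthogonalProjectionOnto_image_sphere {v : E} (hv : ‖v‖ = 1) :
    ball 0 1 ⊆ (ℝ ∙ v)ᗮ.orthogonalProjectionOnto '' sphere 0 1 := by
  intro y hy
  have hy1 : ‖y‖ < 1 := by simpa using hy
  have hvy : inner ℝ v (y : E) = 0 := Submodule.mem_orthogonal_singleton_iff_inner_right.1 y.2
  refine ⟨√(1 - ‖y‖ ^ 2) • v + y, ?_, ?_⟩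
  · rw [mem_sphere_zero_iff_norm, ← sq_eq_sq₀ (norm_nonneg _) zero_le_one,
      norm_add_sq_real, inner_smul_left, hvy, norm_smul, hv, mul_one, Real.norm_eq_abs, sq_abs,
      Real.sq_sqrt (by nlinarith [norm_nonneg y])]
    simp
  · simp [Submodule.orthogonalProjectionOnto_orthogonalComplement_singleton_eq_zero]

variable [FiniteDimensional ℝ E]

theorem cast_finrank_orthogonal_span_singleton {v : E} (hv : v ≠ 0) :
    (finrank ℝ (ℝ ∙ v)ᗮ : ℝ) = finrank ℝ E - 1 := by
  rw [← (ℝ ∙ v).finrank_add_finrank_orthogonal, finrank_span_singleton hv]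
  simp

variable [MeasurableSpace E] [BorelSpace E]

theorem hausdorffMeasure_lt_top_of_subset_sphere_diff_singleton {v : E} (hv : ‖v‖ = 1) {K : Set E}
    (hK : IsCompact K) (hKv : K ⊆ sphere 0 1 \ {v}) : μH[(finrank ℝ E : ℝ) - 1] K < ⊤ := by
  have hv0 : v ≠ 0 := norm_ne_zero_iff.1 (by simp [hv])
  have hstereo : ContinuousOn (stereoToFun v) K :=
    continuousOn_stereoToFun.mono fun x hx =>
      ((inner_lt_one_iff_real_of_norm_eq_one hv (by simpa using (hKv hx).1)).2
        (Ne.symm (hKv hx).2)).ne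
  have hlip : LocallyLipschitz fun w : (ℝ ∙ v)ᗮ => stereoInvFunAux v (w : E) :=
    (contDiff_stereoInvFunAux.comp (ℝ ∙ v)ᗮ.subtypeL.contDiff).locallyLipschitz
  have hK_eq : (fun w : (ℝ ∙ v)ᗮ => stereoInvFunAux v (w : E)) '' (stereoToFun v '' K) = K := by
    rw [image_image]
    refine (image_congr fun x hx => ?_).trans (image_id K)
    exact congrArg Subtype.val (stereo_left_inv hv (x := ⟨x, (hKv hx).1⟩) (hKv hx).2)
  rw [← cast_finrank_orthogonal_span_singleton hv0, ← hK_eq]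
  exact hausdorffMeasure_image_lt_top hlip (hK.image_of_continuousOn hstereo)

variable (E) [Nontrivial E]

theorem hausdorffMeasure_sphere_lt_top :
    μH[(finrank ℝ E : ℝ) - 1] (sphere (0 : E) 1) < ⊤ := by
  obtain ⟨v, hv⟩ := exists_norm_eq E zero_le_one
  have hcompact (w : E) : IsCompact (sphere (0 : E) 1 ∩ {x | inner ℝ w x ≤ 0}) :=
    (isCompact_sphere 0 1).inter_right (isClosed_le (by fun_prop) continuous_const)
  have hhalf (w : E) (hw : ‖w‖ = 1) :
      μH[(finrank ℝ E : ℝ) - 1] (sphere (0 : E) 1 ∩ {x | inner ℝ w x ≤ 0}) < ⊤ := by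
    refine hausdorffMeasure_lt_top_of_subset_sphere_diff_singleton hw (hcompact w) ?_
    rintro x ⟨hx, hwx⟩
    refine ⟨hx, ?_⟩
    rintro rfl
    exact zero_lt_one.not_ge (by simpa [hw] using hwx)
  have hcover : sphere (0 : E) 1 ⊆ (sphere 0 1 ∩ {x | inner ℝ v x ≤ 0}) ∪
      (sphere 0 1 ∩ {x | inner ℝ (-v) x ≤ 0}) := fun x hx => by
    simpa [hx, mem_sphere_zero_iff_norm.1 hx] using le_total (inner ℝ v x) 0
  exact (measure_mono hcover).trans_lt
    (measure_union_lt_top (hhalf v hv) (hhalf (-v) (by simpa)))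

theorem hausdorffMeasure_sphere_pos :
    0 < μH[(finrank ℝ E : ℝ) - 1] (sphere (0 : E) 1) := by
  obtain ⟨v, hv⟩ := exists_norm_eq E zero_le_one
  have hv0 : v ≠ 0 := norm_ne_zero_iff.1 (by simp [hv])
  rw [← cast_finrank_orthogonal_span_singleton hv0]
  calc
    0 < μH[finrank ℝ (ℝ ∙ v)ᗮ] (ball (0 : (ℝ ∙ v)ᗮ) 1) := measure_ball_pos _ _ one_pos
    _ ≤ μH[finrank ℝ (ℝ ∙ v)ᗮ] ((ℝ ∙ v)ᗮ.orthogonalProjectionOnto '' sphere 0 1) :=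
      measure_mono (ball_subset_orthogonalProjectionOnto_image_sphere hv)
    _ ≤ μH[finrank ℝ (ℝ ∙ v)ᗮ] (sphere (0 : E) 1) :=
      hausdorffMeasure_orthogonalProjectionOnto_le _ _ _ (Nat.cast_nonneg _)

end HausdorffSphere

section SurfaceMeasures

open Metric Module Set
open scoped Pointwise

theorem image_set_smul {M X Y G : Type*} [SMul M X] [SMul M Y] [FunLike G X Y]
    [MulActionHomClass G M X Y] (f : G) (s : Set M) (t : Set X) : f '' (s • t) = s • f '' t :=
  image_image2_distrib_right (map_smul f)

variable {E : Type*} [NormedAddCommGroup E] [InnerProductSpace ℝ E] [MeasurableSpace E]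
  [BorelSpace E]

theorem isRotationInvariant_hausdorffMeasure_restrict_sphere (d : ℝ) :
    IsRotationInvariant (μH[d].restrict (sphere (0 : E) 1)) := fun e => by
  have hpre : e ⁻¹' sphere (0 : E) 1 = sphere 0 1 := by simp
  have hmp := (e.toIsometryEquiv.measurePreserving_hausdorffMeasure d).restrict_preimage
    (isClosed_sphere (x := 0) (ε := 1)).measurableSet
  simpa [hpre] using hmp.map_eq

theorem map_coe_toSphere_apply {μ : Measure E} {s : Set E} (hs : MeasurableSet s) :
    μ.toSphere.map ((↑) : sphere (0 : E) 1 → E) s =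
      finrank ℝ E * μ (Ioo (0 : ℝ) 1 • (sphere 0 1 ∩ s)) := by
  rw [Measure.map_apply measurable_subtype_coe hs,
    μ.toSphere_apply' (measurable_subtype_coe hs), Subtype.image_preimage_coe]

variable [FiniteDimensional ℝ E]

theorem isRotationInvariant_map_coe_toSphere :
    IsRotationInvariant ((volume : Measure E).toSphere.map ((↑) : sphere (0 : E) 1 → E)) := by
  intro e
  ext s hs
  have hcone : Ioo (0 : ℝ) 1 • (sphere 0 1 ∩ e ⁻¹' s) =
      e ⁻¹' (Ioo (0 : ℝ) 1 • (sphere 0 1 ∩ s)) := by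
    have himage (t : Set E) : e ⁻¹' t = e.symm '' t := (e.symm.image_eq_preimage_symm t).symm
    rw [himage, himage, image_set_smul, image_inter e.symm.injective, e.symm.image_sphere, map_zero]
  rw [Measure.map_apply e.continuous.measurable hs,
    map_coe_toSphere_apply (e.continuous.measurable hs), map_coe_toSphere_apply hs, hcone,
    e.measurePreserving.measure_preimage_emb e.toHomeomorph.measurableEmbedding]

variable [Nontrivial E]

theorem setAverage_sphere_hausdorffMeasure_eq_average_toSphere {F : Type*}
    [NormedAddCommGroup F] [NormedSpace ℝ F] (f : E → F) :
    ⨍ x in sphere (0 : E) 1, f x ∂μH[(finrank ℝ E : ℝ) - 1] =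
      ⨍ u : sphere (0 : E) 1, f u ∂(volume : Measure E).toSphere := by
  have : Fact (μH[(finrank ℝ E : ℝ) - 1] (sphere (0 : E) 1) < ⊤) :=
    ⟨hausdorffMeasure_sphere_lt_top E⟩
  have : NeZero (μH[(finrank ℝ E : ℝ) - 1].restrict (sphere (0 : E) 1)) :=
    ⟨fun h => (hausdorffMeasure_sphere_pos E).ne' (Measure.restrict_eq_zero.1 h)⟩
  have hemb : MeasurableEmbedding ((↑) : sphere (0 : E) 1 → E) :=
    .subtype_coe isClosed_sphere.measurableSet
  have : NeZero ((volume : Measure E).toSphere.map ((↑) : sphere (0 : E) 1 → E)) :=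
    ⟨(Measure.map_ne_zero_iff hemb.measurable.aemeasurable).2 (Measure.toSphere_ne_zero _)⟩
  rw [(isRotationInvariant_hausdorffMeasure_restrict_sphere _).average_eq_of_ae_norm_eq_one
    isRotationInvariant_map_coe_toSphere
    ((ae_restrict_mem isClosed_sphere.measurableSet).mono fun x hx => mem_sphere_zero_iff_norm.1 hx)
    (hemb.ae_map_iff.2 (.of_forall norm_eq_of_mem_sphere)), average_eq, average_eq,
    hemb.integral_map, map_measureReal_apply hemb.measurable .univ, preimage_univ]

theorem volume_toSphere_real_univ :
    (volume : Measure E).toSphere.real univ =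
      2 * √Real.pi ^ finrank ℝ E / Real.Gamma (finrank ℝ E / 2) := by
  have hdim : (0 : ℝ) < finrank ℝ E := Nat.cast_pos.2 finrank_pos
  have hpos : (0 : ℝ) < finrank ℝ E / 2 := half_pos hdim
  rw [Measure.toSphere_real_apply_univ, measureReal_def, InnerProductSpace.volume_ball,
    Real.Gamma_add_one hpos.ne', ENNReal.ofReal_one,
    one_pow, one_mul, ENNReal.toReal_ofReal (by positivity)]
  field_simp

theorem binghamC_div_binghamC_zero (p : ℕ) [NeZero p] (θ : Fin p → ℝ) :
    binghamC p θ / binghamC p 0 =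
      ⨍ u : sphere (0 : EuclideanSpace ℝ (Fin p)) 1, Real.exp (∑ i, θ i * u.1 i ^ 2)
        ∂(volume : Measure (EuclideanSpace ℝ (Fin p))).toSphere := by
  have hsphere : {x : EuclideanSpace ℝ (Fin p) | ‖x‖ = 1} = sphere 0 1 := by ext; simp
  rw [← setAverage_sphere_hausdorffMeasure_eq_average_toSphere
    fun x : EuclideanSpace ℝ (Fin p) => Real.exp (∑ i, θ i * x i ^ 2), setAverage_eq,
    finrank_euclideanSpace_fin]
  simp [binghamC, hsphere, div_eq_inv_mul]

end SurfaceMeasures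

section Polar

open Metric Module Set

variable {E : Type*} [NormedAddCommGroup E] [NormedSpace ℝ E] [MeasurableSpace E]
  [BorelSpace E] [FiniteDimensional ℝ E] [Nontrivial E] (μ : Measure E) [μ.IsAddHaarMeasure]

theorem lintegral_eq_lintegral_Ioi_lintegral_toSphere {f : E → ENNReal} (hf : Measurable f) :
    ∫⁻ x, f x ∂μ = ∫⁻ r in Ioi (0 : ℝ), ENNReal.ofReal (r ^ (finrank ℝ E - 1)) *
      ∫⁻ u : sphere (0 : E) 1, f (r • (u : E)) ∂μ.toSphere := by
  calc
    ∫⁻ x, f x ∂μ = ∫⁻ x : ({(0)}ᶜ : Set E), f x ∂(μ.comap (↑)) := by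
      rw [lintegral_subtype_comap (measurableSet_singleton _).compl, restrict_compl_singleton]
    _ = ∫⁻ z, f ((z.2 : ℝ) • (z.1 : E)) ∂μ.toSphere.prod (.volumeIoiPow (finrank ℝ E - 1)) := by
      rw [← μ.measurePreserving_homeomorphUnitSphereProd.lintegral_comp_emb
        (Homeomorph.measurableEmbedding _)]
      refine lintegral_congr fun x => ?_
      rw [← homeomorphUnitSphereProd_symm_apply_coe, Homeomorph.symm_apply_apply]
    _ = ∫⁻ r : Ioi (0 : ℝ), ∫⁻ u, f ((r : ℝ) • (u : E)) ∂μ.toSphere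
          ∂.volumeIoiPow (finrank ℝ E - 1) :=
      lintegral_prod_symm' _ (by fun_prop)
    _ = _ := by
      rw [Measure.volumeIoiPow, lintegral_withDensity_eq_lintegral_mul _ (by fun_prop)
        (Measurable.lintegral_prod_left (by fun_prop)), ← lintegral_subtype_comap measurableSet_Ioi]
      rfl

theorem lintegral_Ioi_comp_sq (g : ℝ → ENNReal) :
    ∫⁻ r in Ioi (0 : ℝ), ENNReal.ofReal (2 * r) * g (r ^ 2) = ∫⁻ r in Ioi (0 : ℝ), g r := by
  have himage : (fun r : ℝ => r ^ 2) '' Ioi 0 = Ioi 0 := by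
    ext y
    refine ⟨fun ⟨r, (hr : 0 < r), h⟩ => h ▸ pow_pos hr 2, fun (hy : 0 < y) => ?_⟩
    exact ⟨√y, Real.sqrt_pos.2 hy, Real.sq_sqrt hy.le⟩
  conv_rhs => rw [← himage]
  rw [lintegral_image_eq_lintegral_abs_deriv_mul measurableSet_Ioi (f' := fun r => 2 * r)
    (fun x _ => by simpa using (hasDerivAt_pow 2 x).hasDerivWithinAt)
    fun x (hx : 0 < x) y (hy : 0 < y) h => (sq_eq_sq₀ hx.le hy.le).1 h]
  refine setLIntegral_congr_fun measurableSet_Ioi fun r (hr : 0 < r) => ?_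
  simp only [abs_of_pos (show 0 < 2 * r by positivity)]

theorem sq_rpow_half_sub_one_mul {r : ℝ} (hr : 0 < r) {n : ℕ} (hn : 0 < n) :
    (r ^ 2) ^ ((n : ℝ) / 2 - 1) * r = r ^ (n - 1) := by
  rw [← Real.rpow_natCast_mul hr.le, ← Real.rpow_add_one hr.ne', ← Real.rpow_natCast,
    Nat.cast_pred hn]
  congr 1
  push_cast
  ring

theorem map_norm_sq_withDensity {f : E → ENNReal} (hf : Measurable f) :
    (μ.withDensity f).map (fun x => ‖x‖ ^ 2) =
      (volume.restrict (Ioi (0 : ℝ))).withDensity fun r =>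
        ENNReal.ofReal (r ^ ((finrank ℝ E : ℝ) / 2 - 1) / 2) *
          ∫⁻ u : sphere (0 : E) 1, f (√r • (u : E)) ∂μ.toSphere := by
  have hmeas : Measurable fun r : ℝ => ∫⁻ u : sphere (0 : E) 1, f (√r • (u : E)) ∂μ.toSphere :=
    Measurable.lintegral_prod_right (by fun_prop)
  refine Measure.ext_of_lintegral _ fun g hg => ?_
  rw [lintegral_map hg (by fun_prop), lintegral_withDensity_eq_lintegral_mul _ hf (by fun_prop),
    lintegral_withDensity_eq_lintegral_mul _ (.fun_mul (by fun_prop) hmeas) hg,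
    lintegral_eq_lintegral_Ioi_lintegral_toSphere _ (by fun_prop)]
  refine Eq.trans ?_ (lintegral_Ioi_comp_sq _)
  refine setLIntegral_congr_fun measurableSet_Ioi fun r (hr : 0 < r) => ?_
  have hnorm (u : sphere (0 : E) 1) : ‖r • (u : E)‖ ^ 2 = r ^ 2 := by simp [norm_smul]
  have hweight : ENNReal.ofReal (r ^ (finrank ℝ E - 1)) = ENNReal.ofReal (2 * r) *
      ENNReal.ofReal ((r ^ 2) ^ ((finrank ℝ E : ℝ) / 2 - 1) / 2) := by
    rw [← ENNReal.ofReal_mul (by positivity), ← sq_rpow_half_sub_one_mul hr finrank_pos]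
    congr 1
    ring
  simp only [Pi.mul_apply, hnorm, Real.sqrt_sq hr.le]
  rw [lintegral_mul_const _ (by fun_prop), hweight]
  ring

end Polar

section Gaussian

open Metric ProbabilityTheory Set

theorem map_withDensity_comp_of_measurePreserving {X Y : Type*} [MeasurableSpace X]
    [MeasurableSpace Y] {μ : Measure X} {ν : Measure Y} {e : X → Y}
    (he : MeasurePreserving e μ ν) {f : Y → ENNReal} (hf : Measurable f) :
    (μ.withDensity (f ∘ e)).map e = ν.withDensity f := by
  ext s hs
  rw [Measure.map_apply he.measurable hs, withDensity_apply _ (he.measurable hs),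
    withDensity_apply _ hs]
  exact he.setLIntegral_comp_preimage hs hf

theorem pi_withDensity_ofReal {ι : Type*} [Fintype ι] {X : ι → Type*}
    {mX : ∀ i, MeasurableSpace (X i)} {μ : ∀ i, Measure (X i)} [∀ i, SigmaFinite (μ i)]
    {f : ∀ i, X i → ℝ} (hf : ∀ i, Integrable (f i) (μ i)) (hf0 : ∀ i x, 0 ≤ f i x) :
    (Measure.pi fun i => (μ i).withDensity fun x => ENNReal.ofReal (f i x)) =
      (Measure.pi μ).withDensity fun x => ENNReal.ofReal (∏ i, f i (x i)) := by
  refine Measure.pi_eq fun s hs => ?_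
  calc
    _ = ∫⁻ x, ENNReal.ofReal (∏ i, f i (x i)) ∂Measure.pi fun i => (μ i).restrict (s i) := by
      rw [withDensity_apply _ (.univ_pi hs), Measure.restrict_pi_pi]
    _ = ENNReal.ofReal (∏ i, ∫ x in s i, f i x ∂μ i) := by
      rw [← integral_fintype_prod_eq_prod, ofReal_integral_eq_lintegral_ofReal
        (.fintype_prod_dep fun i => (hf i).restrict)
        (.of_forall fun x => Finset.prod_nonneg fun i _ => hf0 i _)]
    _ = ∏ i, (μ i).withDensity (fun x => ENNReal.ofReal (f i x)) (s i) := by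
      rw [ENNReal.ofReal_prod_of_nonneg fun i _ => integral_nonneg (hf0 i)]
      refine Finset.prod_congr rfl fun i _ => ?_
      rw [withDensity_apply _ (hs i), ofReal_integral_eq_lintegral_ofReal (hf i).restrict
        (.of_forall (hf0 i))]

theorem gaussianPDFReal_zero_inv_neg_two_mul {a : ℝ} (ha : a < 0) (x : ℝ) :
    gaussianPDFReal 0 ((-2 * a)⁻¹).toNNReal x = (√Real.pi)⁻¹ * √(-a) * Real.exp (a * x ^ 2) := by
  have hinv : 0 ≤ (-2 * a)⁻¹ := inv_nonneg.2 (by linarith)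
  have hscale : 2 * Real.pi * (-2 * a)⁻¹ = Real.pi / -a := by field_simp
  have hexp : -(x - 0) ^ 2 / (2 * (-2 * a)⁻¹) = a * x ^ 2 := by field_simp; ring
  rw [gaussianPDFReal, Real.coe_toNNReal _ hinv, hscale, hexp, Real.sqrt_div Real.pi_nonneg,
    inv_div, div_eq_inv_mul]

variable {ι : Type*} [Fintype ι] {θ : ι → ℝ}

theorem pi_gaussianReal_zero_inv_neg_two_mul (hθ : ∀ i, θ i < 0) :
    (Measure.pi fun i => gaussianReal 0 ((-2 * θ i)⁻¹).toNNReal) =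
      volume.withDensity fun x : ι → ℝ => ENNReal.ofReal
        ((√Real.pi)⁻¹ ^ Fintype.card ι * (∏ i, √(-θ i)) * Real.exp (∑ i, θ i * x i ^ 2)) := by
  have hvar (i : ι) : ((-2 * θ i)⁻¹).toNNReal ≠ 0 := by simpa using hθ i
  simp_rw [gaussianReal_of_var_ne_zero _ (hvar _), gaussianPDF_def]
  rw [pi_withDensity_ofReal (fun i => integrable_gaussianPDFReal _ _)
    fun i => gaussianPDFReal_nonneg _ _, volume_pi]
  simp_rw [gaussianPDFReal_zero_inv_neg_two_mul (hθ _), Finset.prod_mul_distrib, Real.exp_sum,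
    Finset.prod_const, Finset.card_univ]

theorem map_sum_sq_volume_withDensity [Nonempty ι] {f : (ι → ℝ) → ENNReal} (hf : Measurable f) :
    (volume.withDensity f).map (fun x => ∑ i, x i ^ 2) =
      (volume.restrict (Ioi (0 : ℝ))).withDensity fun r =>
        ENNReal.ofReal (r ^ ((Fintype.card ι : ℝ) / 2 - 1) / 2) *
          ∫⁻ u : sphere (0 : EuclideanSpace ℝ ι) 1, f (√r • u.1.ofLp)
            ∂(volume : Measure (EuclideanSpace ℝ ι)).toSphere := by
  rw [← map_withDensity_comp_of_measurePreserving (PiLp.volume_preserving_ofLp ι) hf,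
    Measure.map_map (by fun_prop) (by fun_prop)]
  have hnorm : (fun x : ι → ℝ => ∑ i, x i ^ 2) ∘ WithLp.ofLp =
      fun x : EuclideanSpace ℝ ι => ‖x‖ ^ 2 := by
    ext x
    simp [EuclideanSpace.real_norm_sq_eq]
  rw [hnorm, map_norm_sq_withDensity _ (by fun_prop), finrank_euclideanSpace]
  rfl

theorem lintegral_ofReal_mul_exp_toSphere [Nonempty ι] {c : ℝ} (hc : 0 ≤ c) (η : ι → ℝ) :
    ∫⁻ u : sphere (0 : EuclideanSpace ℝ ι) 1, ENNReal.ofReal (c * Real.exp (∑ i, η i * u.1 i ^ 2))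
        ∂(volume : Measure (EuclideanSpace ℝ ι)).toSphere =
      ENNReal.ofReal (c * (2 * √Real.pi ^ Fintype.card ι / Real.Gamma (Fintype.card ι / 2) *
        ⨍ u : sphere (0 : EuclideanSpace ℝ ι) 1, Real.exp (∑ i, η i * u.1 i ^ 2)
          ∂(volume : Measure (EuclideanSpace ℝ ι)).toSphere)) := by
  have hint : Integrable (fun u : sphere (0 : EuclideanSpace ℝ ι) 1 =>
      c * Real.exp (∑ i, η i * u.1 i ^ 2)) (volume : Measure (EuclideanSpace ℝ ι)).toSphere :=
    Continuous.integrable_of_hasCompactSupport (by fun_prop) (.of_compactSpace _)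
  rw [← ofReal_integral_eq_lintegral_ofReal hint (.of_forall fun u => by positivity),
    integral_const_mul, ← measure_smul_average, volume_toSphere_real_univ, finrank_euclideanSpace,
    smul_eq_mul]

theorem map_sum_sq_pi_gaussianReal [Nonempty ι] (hθ : ∀ i, θ i < 0) :
    (Measure.pi fun i => gaussianReal 0 ((-2 * θ i)⁻¹).toNNReal).map (fun x => ∑ i, x i ^ 2) =
      (volume.restrict (Ioi (0 : ℝ))).withDensity fun r => ENNReal.ofReal
        ((r ^ ((Fintype.card ι : ℝ) / 2 - 1) * ∏ i, √(-θ i)) / Real.Gamma (Fintype.card ι / 2) *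
          ⨍ u : sphere (0 : EuclideanSpace ℝ ι) 1, Real.exp (∑ i, r * θ i * u.1 i ^ 2)
            ∂(volume : Measure (EuclideanSpace ℝ ι)).toSphere) := by
  rw [pi_gaussianReal_zero_inv_neg_two_mul hθ, map_sum_sq_volume_withDensity (by fun_prop)]
  refine withDensity_congr_ae ((ae_restrict_mem measurableSet_Ioi).mono fun r (hr : 0 < r) => ?_)
  have hexp (u : EuclideanSpace ℝ ι) :
      ∑ i, θ i * (√r • u.ofLp) i ^ 2 = ∑ i, r * θ i * u i ^ 2 :=
    Finset.sum_congr rfl fun i _ => by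
      rw [Pi.smul_apply, smul_eq_mul, mul_pow, Real.sq_sqrt hr.le]
      ring
  simp only [hexp]
  rw [lintegral_ofReal_mul_exp_toSphere (by positivity), ← ENNReal.ofReal_mul (by positivity),
    inv_pow]
  congr 1
  field_simp

end Gaussian

/-- If `x_1,…,x_p` are independent with `x_i ~ N(0, (−2θ_i)⁻¹)` (all
`θ_i < 0`), then `r = ∑ x_i²` has density
`f(r) = (r^{p/2−1} ∏_k √(−θ_k)/Γ(p/2)) · C(rθ)/C(0)` with respect to Lebesgue
measure on `(0,∞)`: the pushforward of the product Gaussian measure under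
`x ↦ ∑ x_i²` equals Lebesgue measure restricted to `(0,∞)` with density `f`. -/
theorem chi2_mixture_density (p : ℕ) (hp : 2 ≤ p)
    (θ : Fin p → ℝ) (hθ : ∀ i, θ i < 0) :
    Measure.map (fun x : Fin p → ℝ => ∑ i, x i ^ 2)
        (Measure.pi fun i => ProbabilityTheory.gaussianReal 0 ((-2 * θ i)⁻¹).toNNReal)
      = (volume.restrict (Set.Ioi (0 : ℝ))).withDensity fun r =>
          ENNReal.ofReal
            ((r ^ ((p : ℝ) / 2 - 1) * ∏ k, Real.sqrt (-θ k)) / Real.Gamma ((p : ℝ) / 2)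
              * (binghamC p (fun i => r * θ i) / binghamC p 0)) := by
  have : NeZero p := ⟨by lia⟩
  simp_rw [map_sum_sq_pi_gaussianReal hθ, binghamC_div_binghamC_zero, Fintype.card_fin]
end
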